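/- arXiv:1806.01961 — 8 statements merged into one kernel-verified Lean document; each statement's English description precedes it below -/
import Mathlib

section
/- Let A and G be abelian groups and let f : A → G be a pointed map of degree 2 which is anti-symmetric. If A has exponent c (i.e., c·x = 0 for all x ∈ A), then c·f(x) = 0 for all x ∈ A. -/
/-!
A pointed map `f` has degree 2 exactly when its cross effect `f (x + y) - f x - f y` is additive
in `y`. Summing along the multiples of `x` gives `f (n x) = n f x + (n choose 2) D`, where `D` is
the cross effect at `(x, x)`. Comparing the cross effects at `(x, x)` and `(x, -x)` gives
`D = f x + f (-x)`, which is the obstruction to anti-symmetry at `x`.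
-/

/-- `f` is a pointed map of degree 2: its third cross effect vanishes, and so does `f 0`, by
the identity at `(0, 0, 0)`. The order of the summands is fixed so that the domain need not be
commutative. -/
def IsPointedDegreeTwo {A G : Type*} [AddMonoid A] [AddCommGroup G] (f : A → G) : Prop :=
  ∀ x₁ x₂ x₃ : A,
    f (x₁ + x₂ + x₃) - f (x₁ + x₂) - f (x₁ + x₃) - f (x₂ + x₃) + f x₁ + f x₂ + f x₃ = 0

namespace IsPointedDegreeTwo

section AddMonoid

variable {A G : Type*} [AddMonoid A] [AddCommGroup G] {f : A → G}

theorem map_zero (hf : IsPointedDegreeTwo f) : f 0 = 0 := by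
  simpa using hf 0 0 0

/-- The second cross effect `y ↦ f (x + y) - f x - f y` of a pointed map of degree 2, as an
additive map in its second argument. -/
def crossEffect (hf : IsPointedDegreeTwo f) (x : A) : A →+ G where
  toFun y := f (x + y) - f x - f y
  map_zero' := by simp [hf.map_zero]
  map_add' y z := by
    rw [← sub_eq_zero, ← hf x y z, add_assoc x y z]
    abel

theorem crossEffect_apply (hf : IsPointedDegreeTwo f) (x y : A) :
    hf.crossEffect x y = f (x + y) - f x - f y :=
  rfl

theorem map_add (hf : IsPointedDegreeTwo f) (x y : A) :
    f (x + y) = f x + f y + hf.crossEffect x y := by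
  rw [crossEffect_apply]
  abel

theorem map_nsmul (hf : IsPointedDegreeTwo f) (n : ℕ) (x : A) :
    f (n • x) = n • f x + n.choose 2 • hf.crossEffect x x := by
  induction n with
  | zero => simp [hf.map_zero]
  | succ n ih =>
    calc f ((n + 1) • x) = f x + f (n • x) + n • hf.crossEffect x x := by
          rw [succ_nsmul', hf.map_add, _root_.map_nsmul]
      _ = (n + 1) • f x + (n + 1).choose 2 • hf.crossEffect x x := by
          rw [ih, Nat.choose_succ_succ', Nat.choose_one_right, succ_nsmul', add_nsmul]
          abel

end AddMonoid

section AddGroup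

variable {A G : Type*} [AddGroup A] [AddCommGroup G] {f : A → G}

theorem crossEffect_self (hf : IsPointedDegreeTwo f) (x : A) :
    hf.crossEffect x x = f x + f (-x) := by
  rw [← neg_inj, ← _root_.map_neg, crossEffect_apply, add_neg_cancel, hf.map_zero]
  abel

theorem map_nsmul_of_map_neg (hf : IsPointedDegreeTwo f) {x : A} (hx : f (-x) = -f x) (n : ℕ) :
    f (n • x) = n • f x := by
  rw [hf.map_nsmul, hf.crossEffect_self, hx, add_neg_cancel, nsmul_zero, add_zero]

end AddGroup

end IsPointedDegreeTwo

theorem pointed_map_degree_two_antisymm_exponent_general {A G : Type*} [AddGroup A]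
    [AddCommGroup G] {f : A → G} (hf : IsPointedDegreeTwo f) {x : A} (hx : f (-x) = -f x)
    {c : ℕ} (hc : c • x = 0) : c • f x = 0 := by
  rw [← hf.map_nsmul_of_map_neg hx, hc, hf.map_zero]

/-- If `f : A → G` is an anti-symmetric pointed map of degree 2 between abelian
groups and `A` has exponent `c` (i.e. `c • x = 0` for all `x`), then
`c • f x = 0` for all `x`. -/
theorem pointed_map_degree_two_antisymm_exponent
    (A G : Type*) [AddCommGroup A] [AddCommGroup G] (f : A → G)
    (hdeg : ∀ x₁ x₂ x₃ : A,
      f (x₁ + x₂ + x₃) - f (x₁ + x₂) - f (x₁ + x₃) - f (x₂ + x₃)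
        + f x₁ + f x₂ + f x₃ = 0)
    (hanti : ∀ x : A, f (-x) = -f x)
    (c : ℕ) (hc : ∀ x : A, c • x = 0) :
    ∀ x : A, c • f x = 0 :=
  fun x ↦ pointed_map_degree_two_antisymm_exponent_general hdeg (hanti x) (hc x)
end

section
/- Let G be a finite group, T a finite nonempty principal homogeneous space for G, and Γ a group acting on G by group automorphisms and on T by permutations, compatibly with the G-action on T. Then the number of Γ-orbits on T is at most the number of Γ-orbits on G: |T/Γ| ≤ |G/Γ|. -/
/-!
By Burnside's lemma it suffices that `|T^γ| ≤ |G^γ|` for every `γ`; when `Γ` is infinite, the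
lemma is applied to its finite image in `Perm T × Perm G`. Suppose `γ` fixes `t₀`, with
stabilizer `H` in `G`. Then `γ` fixes `g • t₀` exactly when `g⁻¹ * γ • g ∈ H`, so the
`|T^γ| * |H|` such elements `g` are distributed over the fibers above `H` of `g ↦ g⁻¹ * γ • g`.
The nonempty fibers of this map are right cosets of `G^γ`, whence `|T^γ| * |H| ≤ |G^γ| * |H|`.
-/

open MulAction

section Burnside

variable {Γ Q X Y : Type*} [Group Γ] [Group Q] [MulAction Γ X] [MulAction Γ Y]

lemma orbitRel_eq_of_surjective [MulAction Q X] {π : Γ → Q} (hπ : Function.Surjective π)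
    (hsmul : ∀ (γ : Γ) (x : X), π γ • x = γ • x) : orbitRel Q X = orbitRel Γ X := by
  ext x y
  simp only [orbitRel_apply, mem_orbit_iff, hπ.exists, hsmul]

lemma card_orbits_mul_card_group_eq_sum_card_fixedBy [Fintype Γ] [Finite X] :
    Nat.card (orbitRel.Quotient Γ X) * Nat.card Γ = ∑ γ : Γ, Nat.card (fixedBy X γ) := by
  rw [← Nat.card_prod, ← Nat.card_congr (sigmaFixedByEquivOrbitsProdGroup Γ X), Nat.card_sigma]

lemma card_orbits_le_of_card_fixedBy_le_of_finite [Finite Γ] [Finite X] [Finite Y]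
    (h : ∀ γ : Γ, Nat.card (fixedBy X γ) ≤ Nat.card (fixedBy Y γ)) :
    Nat.card (orbitRel.Quotient Γ X) ≤ Nat.card (orbitRel.Quotient Γ Y) := by
  have := Fintype.ofFinite Γ
  refine Nat.le_of_mul_le_mul_right ?_ (Nat.card_pos (α := Γ))
  rw [card_orbits_mul_card_group_eq_sum_card_fixedBy,
    card_orbits_mul_card_group_eq_sum_card_fixedBy]
  exact Finset.sum_le_sum fun γ _ => h γ

lemma card_orbits_le_of_card_fixedBy_le [Finite X] [Finite Y]
    (h : ∀ γ : Γ, Nat.card (fixedBy X γ) ≤ Nat.card (fixedBy Y γ)) :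
    Nat.card (orbitRel.Quotient Γ X) ≤ Nat.card (orbitRel.Quotient Γ Y) := by
  let f : Γ →* Equiv.Perm X × Equiv.Perm Y := (toPermHom Γ X).prod (toPermHom Γ Y)
  let _ : MulAction f.range X := compHom X ((MonoidHom.fst _ _).comp f.range.subtype)
  let _ : MulAction f.range Y := compHom Y ((MonoidHom.snd _ _).comp f.range.subtype)
  have hX : orbitRel f.range X = orbitRel Γ X :=
    orbitRel_eq_of_surjective f.rangeRestrict_surjective fun _ _ => rfl
  have hY : orbitRel f.range Y = orbitRel Γ Y :=
    orbitRel_eq_of_surjective f.rangeRestrict_surjective fun _ _ => rfl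
  rw [orbitRel.Quotient, orbitRel.Quotient, ← hX, ← hY]
  refine card_orbits_le_of_card_fixedBy_le_of_finite fun q => ?_
  obtain ⟨γ, rfl⟩ := f.rangeRestrict_surjective q
  exact h γ

end Burnside

section FixedPoints

variable {G T Γ : Type*} [Group G] [MulAction G T]

lemma card_preimage_smul_of_subset_orbit {t₀ : T} {A : Set T} (hA : A ⊆ orbit G t₀) :
    Nat.card ((fun g : G => g • t₀) ⁻¹' A) = Nat.card (stabilizer G t₀) * Nat.card A := by
  have hrange : A ⊆ Set.range (ofQuotientStabilizer G t₀) := fun t ht => by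
    obtain ⟨g, rfl⟩ := hA ht
    exact ⟨g, ofQuotientStabilizer_mk G t₀ g⟩
  have hpre : (fun g : G => g • t₀) ⁻¹' A =
      QuotientGroup.mk ⁻¹' (ofQuotientStabilizer G t₀ ⁻¹' A) := rfl
  rw [hpre, QuotientGroup.card_preimage_mk,
    Nat.card_preimage_of_injective (injective_ofQuotientStabilizer G t₀) hrange]

variable [Monoid Γ] [MulDistribMulAction Γ G]

lemma inv_mul_smul_eq_iff_mul_inv_mem_fixedBy {γ : Γ} {g h : G} :
    g⁻¹ * γ • g = h⁻¹ * γ • h ↔ g * h⁻¹ ∈ fixedBy G γ := by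
  rw [mem_fixedBy, smul_mul', smul_inv', mul_inv_eq_iff_eq_mul, inv_mul_eq_iff_eq_mul,
    mul_assoc]

lemma card_le_card_fixedBy_mul_of_inv_mul_smul_mem [Finite G] (γ : Γ) {A H : Set G}
    (hA : ∀ g ∈ A, g⁻¹ * γ • g ∈ H) :
    Nat.card A ≤ Nat.card (fixedBy G γ) * Nat.card H := by
  let k (g : G) : G := g⁻¹ * γ • g
  let s : G → G := Function.invFun k
  have hs (g : G) : g * (s (k g))⁻¹ ∈ fixedBy G γ :=
    inv_mul_smul_eq_iff_mul_inv_mem_fixedBy.1 (Function.invFun_eq (f := k) ⟨g, rfl⟩).symm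
  let φ (g : A) : fixedBy G γ × H := (⟨g * (s (k g))⁻¹, hs g⟩, ⟨k g, hA g g.2⟩)
  have hφ : Function.Injective φ := fun g h hgh => by
    have hk : k g = k h := congrArg (fun p => (p.2 : G)) hgh
    have hmul : (g : G) * (s (k g))⁻¹ = h * (s (k h))⁻¹ := congrArg (fun p => (p.1 : G)) hgh
    rw [hk] at hmul
    exact Subtype.ext (mul_right_cancel hmul)
  rw [← Nat.card_prod]
  exact Nat.card_le_card_of_injective φ hφ

variable [MulAction Γ T] [SMulDistribClass Γ G T]

lemma smul_mem_fixedBy_iff_inv_mul_smul_mem_stabilizer {γ : Γ} {t₀ : T}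
    (ht₀ : t₀ ∈ fixedBy T γ) {g : G} :
    g • t₀ ∈ fixedBy T γ ↔ g⁻¹ * γ • g ∈ stabilizer G t₀ := by
  rw [mem_fixedBy, smul_distrib_smul, mem_fixedBy.1 ht₀, mem_stabilizer_iff, mul_smul,
    inv_smul_eq_iff]

lemma card_fixedBy_le_of_isPretransitive [Finite G] [IsPretransitive G T] (γ : Γ) :
    Nat.card (fixedBy T γ) ≤ Nat.card (fixedBy G γ) := by
  obtain hempty | ⟨t₀, ht₀⟩ := (fixedBy T γ).eq_empty_or_nonempty
  · simp [hempty]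
  refine Nat.le_of_mul_le_mul_left ?_ (Nat.card_pos (α := stabilizer G t₀))
  calc Nat.card (stabilizer G t₀) * Nat.card (fixedBy T γ)
      = Nat.card ((fun g : G => g • t₀) ⁻¹' fixedBy T γ) :=
        (card_preimage_smul_of_subset_orbit fun t _ => exists_smul_eq G t₀ t).symm
    _ ≤ Nat.card (fixedBy G γ) * Nat.card (stabilizer G t₀) :=
        card_le_card_fixedBy_mul_of_inv_mul_smul_mem γ fun _ hg =>
          (smul_mem_fixedBy_iff_inv_mul_smul_mem_stabilizer ht₀).1 hg
    _ = Nat.card (stabilizer G t₀) * Nat.card (fixedBy G γ) := Nat.mul_comm _ _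

end FixedPoints

theorem orbit_count_phs_le_general {G T Γ : Type*} [Group G] [Finite G] [MulAction G T]
    [IsPretransitive G T] [Group Γ] [MulDistribMulAction Γ G] [MulAction Γ T]
    [SMulDistribClass Γ G T] :
    Nat.card (orbitRel.Quotient Γ T) ≤ Nat.card (orbitRel.Quotient Γ G) := by
  have : Subsingleton (orbitRel.Quotient G T) :=
    (pretransitive_iff_subsingleton_quotient G T).1 inferInstance
  have : Finite T := .of_finite_mulAction_orbitRel_quotient G T
  exact card_orbits_le_of_card_fixedBy_le card_fixedBy_le_of_isPretransitive

/-- Let `G` be a finite group, `T` a finite nonempty principal homogeneous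
space for `G` (the action is free and transitive), and `Γ` a group acting on
`G` by group automorphisms and on `T` by permutations, compatibly with the
`G`-action on `T`.  Then the number of `Γ`-orbits on `T` is at most the number
of `Γ`-orbits on `G`. -/
theorem orbit_count_phs_le
    (G T Γ : Type*) [Group G] [Finite G] [Finite T] [Nonempty T]
    [MulAction G T]
    (hfree : ∀ (g : G) (t : T), g • t = t → g = 1)
    (htrans : ∀ t t' : T, ∃ g : G, g • t = t')
    [Group Γ] [MulDistribMulAction Γ G] [MulAction Γ T]
    (hcompat : ∀ (γ : Γ) (g : G) (t : T), γ • (g • t) = (γ • g) • (γ • t)) :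
    Nat.card (MulAction.orbitRel.Quotient Γ T)
      ≤ Nat.card (MulAction.orbitRel.Quotient Γ G) := by
  have : IsPretransitive G T := ⟨htrans⟩
  have : SMulDistribClass Γ G T := ⟨hcompat⟩
  exact orbit_count_phs_le_general
end

section
/- Let G be a finite group acting transitively on a finite nonempty set T, and let γ be a pair consisting of a group automorphism of G and a permutation of T satisfying γ(g·t) = γ(g)·γ(t) for all g ∈ G, t ∈ T. Suppose t₀ ∈ T is fixed by γ, and let G₀ be the stabilizer of t₀ in G. Then γ maps G₀ to itself, and |G^γ| ≤ |T^γ| · |G₀^γ| and |T^γ| ≤ |G^γ|, where G^γ, T^γ, G₀^γ denote the fixed points of γ on G, T, G₀ respectively. -/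
/-!
Write `γ = (φ, σ)`. The group `G^γ` acts on `T^γ`, and `t₀` has stabilizer `G₀^γ` in it, so the
first inequality is the orbit-stabilizer formula. For the second, `g⁻¹ • t₀` is fixed by `γ` iff
the commutator map `c g = g * (φ g)⁻¹` sends `g` into `G₀`. The set of such `g` has `|T^γ| * |G₀|`
elements. Since the fibres of `c` are the left cosets of `G^γ`, this number is also
`|G₀ ∩ range c| * |G^γ|`, which is at most `|G₀| * |G^γ|`, and `|G₀|` cancels.
-/

open Function MulAction

theorem ncard_preimage_of_eq_iff_inv_mul_mem {G X : Type*} [Group G] {K : Subgroup G} {f : G → X}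
    (hf : ∀ g h, f g = f h ↔ g⁻¹ * h ∈ K) (s : Set X) :
    (f ⁻¹' s).ncard = (s ∩ Set.range f).ncard * Nat.card K := by
  let fbar : G ⧸ K → X :=
    Quotient.lift f fun g h hgh => (hf g h).2 (QuotientGroup.leftRel_apply.1 hgh)
  have fbar_injective : Injective fbar := by
    rintro ⟨g⟩ ⟨h⟩ hgh
    exact QuotientGroup.eq.2 ((hf g h).1 hgh)
  have range_fbar : Set.range fbar = Set.range f := Set.range_quot_lift _
  calc (f ⁻¹' s).ncard
      = Nat.card (K × (fbar ⁻¹' s : Set (G ⧸ K))) :=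
        Nat.card_congr (QuotientGroup.preimageMkEquivSubgroupProdSet K (fbar ⁻¹' s))
    _ = (fbar ⁻¹' s).ncard * Nat.card K := by
        rw [Nat.card_prod, Nat.card_coe_set_eq, mul_comm]
    _ = (s ∩ Set.range f).ncard * Nat.card K := by
        rw [← Set.preimage_inter_range,
          Set.ncard_preimage_of_injective_subset_range fbar_injective Set.inter_subset_right,
          range_fbar]

section Action

variable {G T : Type*} [Group G] [MulAction G T]

theorem card_subgroup_eq_ncard_orbit_mul_card_stabilizer_inf (K : Subgroup G) (t : T) :
    Nat.card K = (orbit K t).ncard * Nat.card ↥(stabilizer G t ⊓ K) := by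
  have hstab : (stabilizer K t).map K.subtype = stabilizer G t ⊓ K :=
    Subgroup.subgroupOf_map_subtype (stabilizer G t) K
  rw [← hstab, Subgroup.card_map_of_injective K.subtype_injective, ← index_stabilizer, mul_comm,
    Subgroup.card_mul_index]

theorem ncard_setOf_smul_mem (t : T) (U : Set T) :
    {g : G | g • t ∈ U}.ncard = (U ∩ orbit G t).ncard * Nat.card (stabilizer G t) :=
  ncard_preimage_of_eq_iff_inv_mul_mem (f := fun g : G => g • t)
    (fun g h => by rw [mem_stabilizer_iff, mul_smul, inv_smul_eq_iff, eq_comm]) U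

end Action

theorem commutatorMap_eq_iff_inv_mul_mem_eqLocus {G : Type*} [Group G] (φ : G →* G) (g h : G) :
    MonoidHom.commutatorMap φ g = MonoidHom.commutatorMap φ h ↔
      g⁻¹ * h ∈ φ.eqLocus (MonoidHom.id G) := by
  change g / φ g = h / φ h ↔ φ (g⁻¹ * h) = g⁻¹ * h
  rw [map_mul, map_inv, inv_mul_eq_iff_eq_mul, ← mul_assoc, ← mul_inv_eq_iff_eq_mul,
    ← div_eq_mul_inv, ← div_eq_mul_inv, ← inv_inj, inv_div, inv_div, eq_comm]

section Equivariant

variable {G T : Type*} [Group G] [MulAction G T] {φ : G →* G} (σ : T →ₑ[φ] T) {t₀ : T}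

theorem stabilizer_le_comap_of_isFixedPt (ht₀ : IsFixedPt σ t₀) :
    stabilizer G t₀ ≤ (stabilizer G t₀).comap φ := fun g hg =>
  calc φ g • t₀ = φ g • σ t₀ := by rw [ht₀]
    _ = σ (g • t₀) := (map_smulₛₗ σ g t₀).symm
    _ = t₀ := by rw [mem_stabilizer_iff.1 hg, ht₀]

theorem orbit_eqLocus_subset_fixedPoints (ht₀ : IsFixedPt σ t₀) :
    orbit (φ.eqLocus (MonoidHom.id G)) t₀ ⊆ fixedPoints σ := by
  rintro _ ⟨⟨g, hg : φ g = g⟩, rfl⟩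
  change σ (g • t₀) = g • t₀
  rw [map_smulₛₗ, hg, ht₀]

theorem inv_smul_mem_fixedPoints_iff (ht₀ : IsFixedPt σ t₀) (g : G) :
    g⁻¹ • t₀ ∈ fixedPoints σ ↔ MonoidHom.commutatorMap φ g ∈ stabilizer G t₀ := by
  rw [mem_fixedPoints, IsFixedPt, map_smulₛₗ, ht₀, map_inv, eq_inv_smul_iff, ← mul_smul,
    ← div_eq_mul_inv, mem_stabilizer_iff, MonoidHom.commutatorMap_apply]

theorem ncard_fixedPoints_inter_orbit_mul_card_stabilizer (ht₀ : IsFixedPt σ t₀) :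
    (fixedPoints σ ∩ orbit G t₀).ncard * Nat.card (stabilizer G t₀) =
      (stabilizer G t₀ ∩ Set.range (MonoidHom.commutatorMap φ) : Set G).ncard *
        Nat.card (φ.eqLocus (MonoidHom.id G)) :=
  calc (fixedPoints σ ∩ orbit G t₀).ncard * Nat.card (stabilizer G t₀)
      = {g : G | g • t₀ ∈ fixedPoints σ}.ncard := (ncard_setOf_smul_mem t₀ _).symm
    _ = {g : G | g⁻¹ • t₀ ∈ fixedPoints σ}.ncard := (Set.ncard_inv _).symm
    _ = (MonoidHom.commutatorMap φ ⁻¹' (stabilizer G t₀ : Set G)).ncard :=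
        congrArg Set.ncard (Set.ext (inv_smul_mem_fixedPoints_iff σ ht₀))
    _ = _ := ncard_preimage_of_eq_iff_inv_mul_mem (commutatorMap_eq_iff_inv_mul_mem_eqLocus φ) _

theorem ncard_fixedPoints_inter_orbit_le_card_eqLocus [Finite (stabilizer G t₀)]
    (ht₀ : IsFixedPt σ t₀) :
    (fixedPoints σ ∩ orbit G t₀).ncard ≤ Nat.card (φ.eqLocus (MonoidHom.id G)) := by
  refine Nat.le_of_mul_le_mul_right ?_ (Nat.card_pos (α := stabilizer G t₀))
  rw [ncard_fixedPoints_inter_orbit_mul_card_stabilizer σ ht₀, mul_comm]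
  exact Nat.mul_le_mul_left _ (Set.ncard_inter_le_ncard_left _ _ (Set.toFinite _))

theorem finite_fixedPoints_inter_orbit [Finite (stabilizer G t₀)]
    [Finite (φ.eqLocus (MonoidHom.id G))] (ht₀ : IsFixedPt σ t₀) :
    (fixedPoints σ ∩ orbit G t₀).Finite := by
  let S : Set G := stabilizer G t₀ ∩ Set.range (MonoidHom.commutatorMap φ)
  have S_nonempty : S.Nonempty := ⟨1, one_mem _, 1, by simp⟩
  have S_finite : S.Finite := (Set.toFinite (stabilizer G t₀ : Set G)).inter_of_left _
  refine Set.finite_of_ncard_pos (Nat.pos_of_mul_pos_right (b := Nat.card (stabilizer G t₀)) ?_)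
  rw [ncard_fixedPoints_inter_orbit_mul_card_stabilizer σ ht₀]
  exact Nat.mul_pos ((Set.ncard_pos S_finite).2 S_nonempty) Nat.card_pos

theorem fixed_points_transitive_bounds_general [IsPretransitive G T] [Finite (stabilizer G t₀)]
    [Finite (φ.eqLocus (MonoidHom.id G))] (ht₀ : IsFixedPt σ t₀) :
    stabilizer G t₀ ≤ (stabilizer G t₀).comap φ ∧
    Nat.card (φ.eqLocus (MonoidHom.id G)) ≤
      (fixedPoints σ).ncard * Nat.card ↥(stabilizer G t₀ ⊓ φ.eqLocus (MonoidHom.id G)) ∧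
    (fixedPoints σ).ncard ≤ Nat.card (φ.eqLocus (MonoidHom.id G)) := by
  have inter_orbit : fixedPoints σ ∩ orbit G t₀ = fixedPoints σ := by
    rw [orbit_eq_univ, Set.inter_univ]
  have fixedPoints_finite : (fixedPoints σ).Finite :=
    inter_orbit ▸ finite_fixedPoints_inter_orbit σ ht₀
  refine ⟨stabilizer_le_comap_of_isFixedPt σ ht₀, ?_, ?_⟩
  · rw [card_subgroup_eq_ncard_orbit_mul_card_stabilizer_inf (φ.eqLocus (MonoidHom.id G)) t₀]
    exact Nat.mul_le_mul_right _
      (Set.ncard_le_ncard (orbit_eqLocus_subset_fixedPoints σ ht₀) fixedPoints_finite)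
  · exact inter_orbit ▸ ncard_fixedPoints_inter_orbit_le_card_eqLocus σ ht₀

end Equivariant

/-- Let `G` be a finite group acting transitively on a finite nonempty set `T`,
and `γ = (φ, σ)` a pair consisting of a group automorphism `φ` of `G` and a
permutation `σ` of `T` with `σ (g • t) = φ g • σ t`.  Suppose `t₀ ∈ T` is
fixed by `σ` and let `G₀` be the stabilizer of `t₀` in `G`.  Then `γ` maps
`G₀` to itself, and `|G^γ| ≤ |T^γ| · |G₀^γ|` and `|T^γ| ≤ |G^γ|`. -/
theorem fixed_points_transitive_bounds
    (G T : Type*) [Group G] [Finite G] [Finite T] [Nonempty T]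
    [MulAction G T]
    (htrans : ∀ t t' : T, ∃ g : G, g • t = t')
    (φ : G ≃* G) (σ : Equiv.Perm T)
    (hcompat : ∀ (g : G) (t : T), σ (g • t) = φ g • σ t)
    (t₀ : T) (ht₀ : σ t₀ = t₀) :
    (∀ g : G, g • t₀ = t₀ → φ g • t₀ = t₀) ∧
    Nat.card {g : G // φ g = g}
      ≤ Nat.card {t : T // σ t = t} *
          Nat.card {g : G // g • t₀ = t₀ ∧ φ g = g} ∧
    Nat.card {t : T // σ t = t} ≤ Nat.card {g : G // φ g = g} :=
  have : IsPretransitive G T := ⟨htrans⟩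
  fixed_points_transitive_bounds_general (φ := φ.toMonoidHom) ⟨σ, hcompat⟩ ht₀
end

section
/- Let p be a prime and let γ be a p-adic integer with ‖γ‖ = 1 (i.e., γ is a unit of ℤ_p) which is not a root of unity (γ^m ≠ 1 for every positive integer m). Then there is a constant C > 0 such that for all integers n ≥ 2, the p-adic valuation of 1 − γⁿ satisfies v(1 − γⁿ) ≤ C · log n. (Here v : ℤ_p \ {0} → ℤ≥0 is the normalized p-adic valuation with v(p) = 1; note 1 − γⁿ ≠ 0 since γ is not a root of unity.) -/
/-!
If `δ` is closer to `1` than every rational prime is to `0`, then `‖1 - δ ^ n‖ = ‖n‖ * ‖1 - δ‖`: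
this is multiplicative in `n`, and for `n = q` prime the cofactor `∑ i < q, δ ^ i` is congruent to
`q` modulo `1 - δ`, hence has the same norm as `q`. By compactness some power `δ = γ ^ m` is that
close to `1`. As `1 - γ ^ n` divides `1 - δ ^ n`, its valuation is at most `v(n) + v(1 - δ)`, and
`v(n) ≤ log n / log p`.
-/

section Ultrametric

variable {R : Type*} [SeminormedRing R] [NormOneClass R] [IsUltrametricDist R] {a : R}

lemma norm_geom_sum_le_one (ha : ‖a‖ ≤ 1) (n : ℕ) : ‖∑ i ∈ Finset.range n, a ^ i‖ ≤ 1 :=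
  IsUltrametricDist.norm_sum_le_of_forall_le_of_nonneg zero_le_one fun i _ ↦
    (norm_pow_le a i).trans (pow_le_one₀ (norm_nonneg a) ha)

lemma norm_one_sub_pow_le (ha : ‖a‖ ≤ 1) (n : ℕ) : ‖1 - a ^ n‖ ≤ ‖1 - a‖ := by
  rw [← mul_neg_geom_sum]
  exact norm_mul_le_of_le le_rfl (norm_geom_sum_le_one ha n) |>.trans_eq (mul_one _)

lemma norm_natCast_sub_geom_sum_le (ha : ‖a‖ ≤ 1) (n : ℕ) :
    ‖(n : R) - ∑ i ∈ Finset.range n, a ^ i‖ ≤ ‖1 - a‖ := by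
  have hsum : (n : R) - ∑ i ∈ Finset.range n, a ^ i = ∑ i ∈ Finset.range n, (1 - a ^ i) := by
    simp
  rw [hsum]
  exact IsUltrametricDist.norm_sum_le_of_forall_le_of_nonneg (norm_nonneg _) fun i _ ↦
    norm_one_sub_pow_le ha i

lemma norm_le_one_of_norm_one_sub_le_one (h : ‖1 - a‖ ≤ 1) : ‖a‖ ≤ 1 := by
  have hmax := IsUltrametricDist.norm_add_le_max (a - 1) 1
  rw [sub_add_cancel, norm_sub_rev, norm_one, max_eq_right h] at hmax
  exact hmax

lemma norm_geom_sum_eq_norm_natCast {n : ℕ} (h : ‖1 - a‖ < ‖(n : R)‖) :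
    ‖∑ i ∈ Finset.range n, a ^ i‖ = ‖(n : R)‖ := by
  have ha : ‖a‖ ≤ 1 := norm_le_one_of_norm_one_sub_le_one
    (h.le.trans (IsUltrametricDist.norm_natCast_le_one R n))
  have hlt : ‖(n : R) - ∑ i ∈ Finset.range n, a ^ i‖ < ‖(n : R)‖ :=
    (norm_natCast_sub_geom_sum_le ha n).trans_lt h
  rw [sub_eq_add_neg] at hlt
  rw [IsUltrametricDist.norm_eq_of_add_norm_lt_max (hlt.trans_le (le_max_left _ _)), norm_neg]

end Ultrametric

lemma norm_one_sub_pow_eq_norm_natCast_mul {R : Type*} [SeminormedRing R] [NormOneClass R]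
    [NormMulClass R] [IsUltrametricDist R] {a : R}
    (h : ∀ q : ℕ, q.Prime → ‖1 - a‖ < ‖(q : R)‖) (n : ℕ) :
    ‖1 - a ^ n‖ = ‖(n : R)‖ * ‖1 - a‖ := by
  induction n using Nat.recOnMul generalizing a with
  | zero => simp
  | one => simp
  | prime q hq =>
    rw [← mul_neg_geom_sum, norm_mul, norm_geom_sum_eq_norm_natCast (h q hq), mul_comm]
  | mul k l ihk ihl =>
    have hk : ‖1 - a ^ k‖ ≤ ‖1 - a‖ :=
      (ihk h).trans_le <|
        mul_le_of_le_one_left (norm_nonneg _) (IsUltrametricDist.norm_natCast_le_one R k)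
    rw [pow_mul, ihl fun q hq ↦ hk.trans_lt (h q hq), ihk h, Nat.cast_mul, norm_mul]
    ring

lemma exists_norm_one_sub_pow_lt_of_isUnit {R : Type*} [NormedRing R] [CompactSpace R] {u : R}
    (hu : IsUnit u) {ε : ℝ} (hε : 0 < ε) : ∃ m : ℕ, 0 < m ∧ ‖1 - u ^ m‖ < ε := by
  obtain ⟨u, rfl⟩ := hu
  have hnear : ∀ᶠ v : Rˣ in nhds 1, ‖1 - (v : R)‖ < ε :=
    ContinuousAt.eventually_lt (by fun_prop) continuousAt_const (by simpa)
  obtain ⟨m, hlt, hm⟩ :=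
    (((mapClusterPt_one_atTop_pow u).frequently hnear).and_eventually
      (Filter.eventually_gt_atTop 0)).exists
  exact ⟨m, hm, by simpa using hlt⟩

lemma padicValNat_le_log_div_log (p n : ℕ) : (padicValNat p n : ℝ) ≤ Real.log n / Real.log p :=
  (Nat.cast_le.mpr (padicValNat_le_nat_log n)).trans (Real.natLog_le_logb n p)

section Padic

variable {p : ℕ} [Fact p.Prime]

lemma norm_p_le_norm_prime {q : ℕ} (hq : q.Prime) : ‖(p : ℤ_[p])‖ ≤ ‖(q : ℤ_[p])‖ := by
  obtain rfl | hpq := eq_or_ne p q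
  · rfl
  · have hcop : p.Coprime q := (Nat.coprime_primes Fact.out hq).mpr hpq
    exact (PadicInt.norm_le_one _).trans_eq (PadicInt.norm_natCast_eq_one_iff.mpr hcop).symm

lemma padicInt_valuation_natCast (n : ℕ) : (n : ℤ_[p]).valuation = padicValNat p n := by
  have h := PadicInt.valuation_coe (n : ℤ_[p])
  rw [PadicInt.coe_natCast, Padic.valuation_natCast] at h
  exact_mod_cast h.symm

lemma valuation_le_valuation_of_norm_le {x y : ℤ_[p]} (hx : x ≠ 0) (h : ‖x‖ ≤ ‖y‖) :
    y.valuation ≤ x.valuation := by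
  have hy : y ≠ 0 := norm_pos_iff.mp ((norm_pos_iff.mpr hx).trans_le h)
  rw [← PadicInt.norm_le_pow_iff_le_valuation x hx, ← PadicInt.norm_eq_zpow_neg_valuation hy]
  exact h

lemma valuation_one_sub_pow {δ : ℤ_[p]} (h : ‖1 - δ‖ < ‖(p : ℤ_[p])‖) {n : ℕ}
    (hδ : δ ^ n ≠ 1) : (1 - δ ^ n).valuation = padicValNat p n + (1 - δ).valuation := by
  have hnorm : ‖1 - δ ^ n‖ = ‖(n : ℤ_[p]) * (1 - δ)‖ := by
    rw [norm_mul, norm_one_sub_pow_eq_norm_natCast_mul fun q hq ↦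
      h.trans_le (norm_p_le_norm_prime hq)]
  have hpow : 1 - δ ^ n ≠ 0 := sub_ne_zero.mpr hδ.symm
  have hmul : (n : ℤ_[p]) * (1 - δ) ≠ 0 := by rwa [← norm_ne_zero_iff, ← hnorm, norm_ne_zero_iff]
  rw [← padicInt_valuation_natCast,
    ← PadicInt.valuation_mul (left_ne_zero_of_mul hmul) (right_ne_zero_of_mul hmul)]
  exact (valuation_le_valuation_of_norm_le hmul hnorm.ge).antisymm
    (valuation_le_valuation_of_norm_le hpow hnorm.le)

lemma valuation_one_sub_pow_le_add {γ : ℤ_[p]} {m n : ℕ} (h : ‖1 - γ ^ m‖ < ‖(p : ℤ_[p])‖)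
    (hγ : γ ^ (m * n) ≠ 1) :
    (1 - γ ^ n).valuation ≤ padicValNat p n + (1 - γ ^ m).valuation := by
  rw [← valuation_one_sub_pow h (by rwa [← pow_mul]), ← pow_mul]
  refine valuation_le_valuation_of_norm_le (sub_ne_zero.mpr hγ.symm) ?_
  rw [mul_comm, pow_mul]
  exact norm_one_sub_pow_le (PadicInt.norm_le_one _) m

end Padic

/-- Let `γ` be a `p`-adic integer of norm `1` which is not a root of unity.
Then there is a constant `C > 0` such that for all `n ≥ 2`, the `p`-adic
valuation of `1 - γ ^ n` is at most `C * log n`. -/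
theorem padic_valuation_one_sub_pow_le
    (p : ℕ) [Fact p.Prime] (γ : ℤ_[p])
    (hγ : ‖γ‖ = 1) (hroot : ∀ m : ℕ, 0 < m → γ ^ m ≠ 1) :
    ∃ C : ℝ, 0 < C ∧ ∀ n : ℕ, 2 ≤ n →
      ((1 - γ ^ n).valuation : ℝ) ≤ C * Real.log n := by
  have hp : p.Prime := Fact.out
  have hlogp : 0 < Real.log p := Real.log_pos (Nat.one_lt_cast.mpr hp.one_lt)
  obtain ⟨m, hm, hclose⟩ : ∃ m, 0 < m ∧ ‖1 - γ ^ m‖ < ‖(p : ℤ_[p])‖ :=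
    exists_norm_one_sub_pow_lt_of_isUnit (PadicInt.isUnit_iff.mpr hγ)
      (norm_pos_iff.mpr PadicInt.prime_p.ne_zero)
  set c := (1 - γ ^ m).valuation
  refine ⟨1 / Real.log p + c / Real.log 2, by positivity, fun n hn ↦ ?_⟩
  have hval : (1 - γ ^ n).valuation ≤ padicValNat p n + c :=
    valuation_one_sub_pow_le_add hclose (hroot (m * n) (by positivity))
  have hlog : 1 ≤ Real.log n / Real.log 2 :=
    (one_le_div (Real.log_pos one_lt_two)).mpr (Real.log_le_log two_pos (Nat.ofNat_le_cast.mpr hn))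
  calc ((1 - γ ^ n).valuation : ℝ)
      ≤ padicValNat p n + c := by exact_mod_cast hval
    _ ≤ Real.log n / Real.log p + c * (Real.log n / Real.log 2) :=
      add_le_add (padicValNat_le_log_div_log p n) (le_mul_of_one_le_right c.cast_nonneg hlog)
    _ = (1 / Real.log p + c / Real.log 2) * Real.log n := by ring
end

section
/- Let p be a prime and let x ∈ ℚ_p be nonzero with ‖x‖ < p^{−2/(p−1)}. Then ‖1 − exp_p(x)‖ = ‖x‖, where exp_p(x) = Σ_{k≥0} x^k/k! is the p-adic exponential (the sum of the exponential power series, which converges for such x). -/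
/-!
Legendre's formula bounds the norm of the term of degree `n + 1` of the exponential series by
`‖x‖ (‖x‖ / r) ^ n`, where `r = p ^ (-1 / (p - 1))`. For `‖x‖ < r` the series therefore converges.
If `x ≠ 0`, its terms of degree at least two are all bounded by `‖x‖ (‖x‖ / r) < ‖x‖`, so by the
ultrametric inequality `exp x - 1` has the norm of its linear term `x`.
-/

open scoped BigOperators

/-- The `p`-adic exponential, defined by the usual exponential power series. -/
noncomputable def padicExp (p : ℕ) [Fact p.Prime] (x : ℚ_[p]) : ℚ_[p] :=
  ∑' k : ℕ, x ^ k / (k.factorial : ℚ_[p])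

open NormedSpace (exp)
open scoped Nat

/-- The radius `p ^ (-1 / (p - 1))` of the open disc of convergence of the `p`-adic exponential, as
a real number. -/
noncomputable def padicExpRadius (p : ℕ) : ℝ :=
  (p : ℝ) ^ (-(1 / ((p : ℝ) - 1)))

section Radius

variable (p : ℕ) [hp : Fact p.Prime]

lemma padicExpRadius_pos : 0 < padicExpRadius p :=
  Real.rpow_pos_of_pos (mod_cast hp.out.pos) _

lemma rpow_neg_two_div_le_padicExpRadius :
    (p : ℝ) ^ (-(2 / ((p : ℝ) - 1))) ≤ padicExpRadius p := by
  have one_lt_p : (1 : ℝ) < p := mod_cast hp.out.one_lt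
  exact Real.rpow_le_rpow_of_exponent_le one_lt_p.le <| neg_le_neg <|
    div_le_div_of_nonneg_right one_le_two (sub_pos.mpr one_lt_p).le

lemma padicValNat_factorial_succ_le_div (n : ℕ) :
    (padicValNat p (n + 1)! : ℝ) ≤ n / ((p : ℝ) - 1) := by
  have p_sub_one_pos : 0 < (p : ℝ) - 1 := sub_pos.mpr (mod_cast hp.out.one_lt)
  have legendre : (p - 1) * padicValNat p (n + 1)! ≤ n :=
    Nat.lt_succ_iff.mp (sub_one_mul_padicValNat_factorial_lt_of_ne_zero p n.succ_ne_zero)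
  rw [le_div_iff₀' p_sub_one_pos, ← Nat.cast_pred hp.out.pos]
  exact_mod_cast legendre

lemma norm_inv_factorial_succ_le (n : ℕ) :
    ‖((n + 1)! : ℚ_[p])⁻¹‖ ≤ (padicExpRadius p)⁻¹ ^ n := by
  have p_pos : (0 : ℝ) < p := mod_cast hp.out.pos
  have factorial_ne_zero : ((n + 1)! : ℚ_[p]) ≠ 0 := mod_cast (n + 1).factorial_ne_zero
  calc ‖((n + 1)! : ℚ_[p])⁻¹‖
      = (p : ℝ) ^ (padicValNat p (n + 1)! : ℝ) := by
        rw [norm_inv, Padic.norm_eq_zpow_neg_valuation factorial_ne_zero,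
          Padic.valuation_natCast, zpow_neg, inv_inv, zpow_natCast, Real.rpow_natCast]
    _ ≤ (p : ℝ) ^ (n / ((p : ℝ) - 1)) :=
        Real.rpow_le_rpow_of_exponent_le (mod_cast hp.out.one_le)
          (padicValNat_factorial_succ_le_div p n)
    _ = (padicExpRadius p)⁻¹ ^ n := by
        rw [padicExpRadius, Real.rpow_neg p_pos.le, inv_inv, ← Real.rpow_mul_natCast p_pos.le,
          one_div_mul_eq_div]

end Radius

section SeminormedRing

variable (p : ℕ) [Fact p.Prime] {A : Type*} [SeminormedRing A] [NormedAlgebra ℚ_[p] A]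

lemma norm_inv_factorial_smul_pow_succ_le (x : A) (n : ℕ) :
    ‖((n + 1)! : ℚ_[p])⁻¹ • x ^ (n + 1)‖ ≤ ‖x‖ * (‖x‖ / padicExpRadius p) ^ n := by
  calc ‖((n + 1)! : ℚ_[p])⁻¹ • x ^ (n + 1)‖
      ≤ ‖((n + 1)! : ℚ_[p])⁻¹‖ * ‖x ^ (n + 1)‖ := norm_smul_le _ _
    _ ≤ (padicExpRadius p)⁻¹ ^ n * ‖x‖ ^ (n + 1) :=
        mul_le_mul (norm_inv_factorial_succ_le p n) (norm_pow_le' x n.succ_pos) (norm_nonneg _)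
          (pow_nonneg (inv_nonneg.mpr (padicExpRadius_pos p).le) n)
    _ = ‖x‖ * (‖x‖ / padicExpRadius p) ^ n := by ring

lemma summable_inv_factorial_smul_pow [CompleteSpace A] {x : A} (hx : ‖x‖ < padicExpRadius p) :
    Summable fun n : ℕ ↦ (n ! : ℚ_[p])⁻¹ • x ^ n := by
  have ratio_nonneg : 0 ≤ ‖x‖ / padicExpRadius p :=
    div_nonneg (norm_nonneg x) (padicExpRadius_pos p).le
  have ratio_lt_one : ‖x‖ / padicExpRadius p < 1 := (div_lt_one (padicExpRadius_pos p)).mpr hx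
  rw [← summable_nat_add_iff 1]
  exact .of_norm_bounded ((summable_geometric_of_lt_one ratio_nonneg ratio_lt_one).mul_left ‖x‖)
    (norm_inv_factorial_smul_pow_succ_le p x)

end SeminormedRing

section NormedRing

variable (p : ℕ) [Fact p.Prime] {A : Type*} [NormedRing A] [NormedAlgebra ℚ_[p] A]
  [CompleteSpace A] {x : A}

lemma exp_sub_one_sub_self_eq_tsum (hx : ‖x‖ < padicExpRadius p) :
    exp x - 1 - x = ∑' n : ℕ, ((n + 2)! : ℚ_[p])⁻¹ • x ^ (n + 2) := by
  simp only [NormedSpace.exp_eq_tsum ℚ_[p]]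
  rw [sub_sub, sub_eq_iff_eq_add', ← (summable_inv_factorial_smul_pow p hx).sum_add_tsum_nat_add 2]
  simp [Finset.sum_range_succ]

lemma norm_exp_sub_one_sub_self_le [IsUltrametricDist A] (hx : ‖x‖ < padicExpRadius p) :
    ‖exp x - 1 - x‖ ≤ ‖x‖ * (‖x‖ / padicExpRadius p) := by
  have radius_pos := padicExpRadius_pos p
  have ratio_le_one : ‖x‖ / padicExpRadius p ≤ 1 := (div_le_one radius_pos).mpr hx.le
  rw [exp_sub_one_sub_self_eq_tsum p hx]
  refine IsUltrametricDist.norm_tsum_le_of_forall_le fun n ↦ ?_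
  calc ‖((n + 2)! : ℚ_[p])⁻¹ • x ^ (n + 2)‖
      ≤ ‖x‖ * (‖x‖ / padicExpRadius p) ^ (n + 1) := norm_inv_factorial_smul_pow_succ_le p x (n + 1)
    _ ≤ ‖x‖ * (‖x‖ / padicExpRadius p) := by
        gcongr
        exact pow_le_of_le_one (by positivity) ratio_le_one n.succ_ne_zero

theorem padic_norm_one_sub_exp_general [IsUltrametricDist A] (hx : ‖x‖ < padicExpRadius p) :
    ‖1 - exp x‖ = ‖x‖ := by
  rcases eq_or_ne x 0 with rfl | x_ne_zero
  · simp
  have remainder_lt : ‖exp x - 1 - x‖ < ‖x‖ :=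
    (norm_exp_sub_one_sub_self_le p hx).trans_lt <|
      mul_lt_of_lt_one_right (norm_pos_iff.mpr x_ne_zero)
        ((div_lt_one (padicExpRadius_pos p)).mpr hx)
  refine IsUltrametricDist.norm_eq_of_add_norm_lt_max (lt_max_of_lt_right ?_)
  rwa [← norm_neg, neg_add', neg_sub]

end NormedRing

lemma padicExp_eq_exp (p : ℕ) [Fact p.Prime] (x : ℚ_[p]) : padicExp p x = exp x := by
  rw [padicExp, NormedSpace.exp_eq_tsum_div]

/-- If `x ∈ ℚ_p` is nonzero with `‖x‖ < p ^ (-2/(p-1))`, then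
`‖1 - exp_p x‖ = ‖x‖`. -/
theorem padic_norm_one_sub_exp
    (p : ℕ) [Fact p.Prime] (x : ℚ_[p]) (hx : x ≠ 0)
    (hnorm : ‖x‖ < (p : ℝ) ^ (-(2 / ((p : ℝ) - 1)))) :
    ‖1 - padicExp p x‖ = ‖x‖ := by
  rw [padicExp_eq_exp]
  exact padic_norm_one_sub_exp_general p (hnorm.trans_le (rpow_neg_two_div_le_padicExpRadius p))
end

section
/- Let C > 0 and let φ : ℕ → ℕ be a function; define ψ(d) = Σ_{e ∣ d} φ(e). Suppose ψ(d) ≥ d for all d ≥ 1 and that ψ is nondecreasing on positive integers. Suppose that for each positive integer d we are given a finite set G_d of cardinality ψ(d) with an action of a group Γ_d, together with a Γ_d-stable partition G_d = ⋃_{e ∣ d} G'_{d,e} indexed by the divisors e of d, with |G'_{d,e}| = φ(e), such that every Γ_d-orbit contained in G'_{d,e} has cardinality at least C · log ψ(e). Then there is a constant C₁ > 0 such that for all d > 1, the number of Γ_d-orbits on G_d is at most C₁ · ψ(d) / log ψ(d). -/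
open scoped BigOperators

/-!
The number of orbits on a finite set is `∑ x, 1 / |orbit x|`, so at most the number of points whose
orbit has fewer than `M` elements plus `|X| / M`.  Put `N = |X|` and `M = C log r` with
`r = N ^ (1/3)`.  A point in a part `e` with `ψ e > r` has an orbit of size at least `M`, and
`N / M = 3 N / (C log N)`.  The other points lie in parts with `e ≤ ψ e ≤ r` and `φ e ≤ ψ e ≤ r`,
so there are at most `r ^ 2 = N / r` of them, and `log N = 3 log r ≤ 3 r`.
-/

open scoped Finset

section OrbitCounting

open MulAction

variable {Γ X : Type*} [Group Γ] [MulAction Γ X] [Fintype X]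

lemma sum_inv_card_orbit {K : Type*} [DivisionSemiring K] [CharZero K] :
    ∑ x : X, (Nat.card (orbit Γ x) : K)⁻¹ = Nat.card (orbitRel.Quotient Γ X) := by
  classical
  have := Fintype.ofFinite (orbitRel.Quotient Γ X)
  have sum_over_orbit (ω : orbitRel.Quotient Γ X) :
      ∑ x : ω.orbit, (Nat.card (orbit Γ (x : X)) : K)⁻¹ = 1 := by
    have card_orbit_eq (x : ω.orbit) : Nat.card (orbit Γ (x : X)) = Nat.card ω.orbit := by
      rw [← orbitRel.Quotient.orbit_mk, orbitRel.Quotient.mem_orbit.1 x.2]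
    have := ω.nonempty_orbit.to_subtype
    have card_ne_zero : (Nat.card ω.orbit : K) ≠ 0 := Nat.cast_ne_zero.2 Nat.card_pos.ne'
    simp only [card_orbit_eq, Finset.sum_const, Finset.card_univ, ← Nat.card_eq_fintype_card,
      nsmul_eq_mul, mul_inv_cancel₀ card_ne_zero]
  calc ∑ x : X, (Nat.card (orbit Γ x) : K)⁻¹
      = ∑ p : Σ ω : orbitRel.Quotient Γ X, ω.orbit, (Nat.card (orbit Γ (p.2 : X)) : K)⁻¹ :=
        Fintype.sum_equiv (selfEquivSigmaOrbits' Γ X) _ _ fun _ => rfl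
    _ = ∑ _ω : orbitRel.Quotient Γ X, 1 := by
        rw [Fintype.sum_sigma]
        exact Fintype.sum_congr _ _ sum_over_orbit
    _ = Nat.card (orbitRel.Quotient Γ X) := by
        rw [Finset.sum_const, nsmul_one, Finset.card_univ, Nat.card_eq_fintype_card]

lemma card_orbits_le_card_filter_add_div {K : Type*} [Field K] [LinearOrder K]
    [IsStrictOrderedRing K] {M : K} (hM : 0 < M) :
    (Nat.card (orbitRel.Quotient Γ X) : K)
      ≤ #{x : X | (Nat.card (orbit Γ x) : K) < M} + Nat.card X / M := by
  have inv_card_orbit_le (x : X) : (Nat.card (orbit Γ x) : K)⁻¹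
      ≤ (if (Nat.card (orbit Γ x) : K) < M then 1 else 0) + M⁻¹ := by
    split_ifs with hx
    · exact (Nat.cast_inv_le_one _).trans (le_add_of_nonneg_right (inv_nonneg.2 hM.le))
    · rw [zero_add]
      exact inv_anti₀ hM (not_lt.1 hx)
  calc (Nat.card (orbitRel.Quotient Γ X) : K)
      = ∑ x : X, (Nat.card (orbit Γ x) : K)⁻¹ := sum_inv_card_orbit.symm
    _ ≤ ∑ x : X, ((if (Nat.card (orbit Γ x) : K) < M then 1 else 0) + M⁻¹) :=
        Finset.sum_le_sum fun x _ => inv_card_orbit_le x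
    _ = #{x : X | (Nat.card (orbit Γ x) : K) < M} + Nat.card X / M := by
        rw [Finset.sum_add_distrib, Finset.sum_boole, Finset.sum_const, Finset.card_univ,
          nsmul_eq_mul, ← Nat.card_eq_fintype_card, div_eq_mul_inv]

lemma card_orbits_le_of_card_sublevel_le_pow {C : ℝ} (hC : 0 < C) (m : ℕ) (s : X → ℝ)
    (hs : ∀ r : ℝ, 0 < r → (#{x | s x ≤ r} : ℝ) ≤ r ^ m)
    (horbit : ∀ x, C * Real.log (s x) ≤ Nat.card (orbit Γ x)) (hX : 1 < Nat.card X) :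
    (Nat.card (orbitRel.Quotient Γ X) : ℝ)
      ≤ (m + 1) * (1 + 1 / C) * Nat.card X / Real.log (Nat.card X) := by
  set N : ℝ := (Nat.card X : ℝ)
  have hlogN : 0 < Real.log N := Real.log_pos (Nat.one_lt_cast.2 hX)
  obtain ⟨r, hr, hrN⟩ : ∃ r : ℝ, 0 < r ∧ r ^ (m + 1) = N :=
    ⟨N ^ ((m + 1 : ℕ) : ℝ)⁻¹, by positivity,
      Real.rpow_inv_natCast_pow (by positivity) m.succ_ne_zero⟩
  have hlog : Real.log N = (m + 1) * Real.log r := by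
    rw [← hrN, Real.log_pow, Nat.cast_add_one]
  have hlogr : 0 < Real.log r := pos_of_mul_pos_right (hlog ▸ hlogN) (by positivity)
  have small_orbit (x : X) (hx : (Nat.card (orbit Γ x) : ℝ) < C * Real.log r) : s x ≤ r := by
    contrapose! hx
    exact (by gcongr : C * Real.log r ≤ C * Real.log (s x)).trans (horbit x)
  have card_small : (#{x : X | (Nat.card (orbit Γ x) : ℝ) < C * Real.log r} : ℝ) ≤ r ^ m := by
    refine le_trans ?_ (hs r hr)
    exact_mod_cast Finset.card_le_card (Finset.monotone_filter_right _ fun x _ => small_orbit x)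
  have pow_le : r ^ m ≤ N / Real.log r := by
    rw [le_div_iff₀ hlogr, ← hrN, pow_succ]
    gcongr
    exact Real.log_le_self hr.le
  calc (Nat.card (orbitRel.Quotient Γ X) : ℝ)
      ≤ #{x : X | (Nat.card (orbit Γ x) : ℝ) < C * Real.log r} + N / (C * Real.log r) :=
        card_orbits_le_card_filter_add_div (by positivity)
    _ ≤ N / Real.log r + N / (C * Real.log r) := by gcongr; exact card_small.trans pow_le
    _ = (m + 1) * (1 + 1 / C) * N / Real.log N := by
        rw [hlog]
        field_simp

end OrbitCounting

lemma card_sublevel_le_sq {X : Type*} [Fintype X] (P : X → ℕ) (ψ : ℕ → ℝ)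
    (hpos : ∀ x, 0 < P x) (hle : ∀ x, P x ≤ ψ (P x))
    (hfiber : ∀ x, (#{y | P y = P x} : ℝ) ≤ ψ (P x)) {r : ℝ} (hr : 0 ≤ r) :
    (#{x | ψ (P x) ≤ r} : ℝ) ≤ r ^ 2 := by
  have fiber_le : ∀ e ∈ ({x | ψ (P x) ≤ r} : Finset X).image P,
      #{y ∈ ({x | ψ (P x) ≤ r} : Finset X) | P y = e} ≤ ⌊r⌋₊ := by
    simp only [Finset.forall_mem_image, Finset.mem_filter_univ]
    intro x hx
    have fiber_mono : #{y ∈ ({x | ψ (P x) ≤ r} : Finset X) | P y = P x} ≤ #{y | P y = P x} :=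
      Finset.card_le_card (Finset.filter_subset_filter _ (Finset.subset_univ _))
    exact fiber_mono.trans (Nat.le_floor ((hfiber x).trans hx))
  have labels_subset : ({x | ψ (P x) ≤ r} : Finset X).image P ⊆ Finset.Icc 1 ⌊r⌋₊ := by
    simp only [Finset.image_subset_iff, Finset.mem_filter_univ, Finset.mem_Icc]
    exact fun x hx => ⟨hpos x, Nat.le_floor ((hle x).trans hx)⟩
  have labels_le : #(({x | ψ (P x) ≤ r} : Finset X).image P) ≤ ⌊r⌋₊ := by
    simpa only [Nat.card_Icc, Nat.add_sub_cancel] using Finset.card_le_card labels_subset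
  calc (#{x | ψ (P x) ≤ r} : ℝ)
      ≤ (⌊r⌋₊ * ⌊r⌋₊ : ℕ) := Nat.cast_le.2 <|
        (Finset.card_le_mul_card_image _ _ fiber_le).trans (Nat.mul_le_mul_left _ labels_le)
    _ = (⌊r⌋₊ : ℝ) ^ 2 := by rw [Nat.cast_mul, sq]
    _ ≤ r ^ 2 := by gcongr; exact Nat.floor_le hr

theorem orbit_bound_general {C : ℝ} (hC : 0 < C) {φ ψ : ℕ → ℕ}
    (hψ : ∀ d, ψ d = ∑ e ∈ d.divisors, φ e) {d : ℕ} (hd : 1 < d)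
    (hψge : ∀ e ∈ d.divisors, e ≤ ψ e)
    {Γ X : Type*} [Group Γ] [MulAction Γ X] [Finite X] (hX : Nat.card X = ψ d)
    (P : X → ℕ) (hPdvd : ∀ x, P x ∣ d) (hPcard : ∀ e, e ∣ d → Nat.card {x // P x = e} = φ e)
    (horbit : ∀ x, C * Real.log (ψ (P x)) ≤ Nat.card (MulAction.orbit Γ x)) :
    (Nat.card (MulAction.orbitRel.Quotient Γ X) : ℝ)
      ≤ 3 * (1 + 1 / C) * ψ d / Real.log (ψ d) := by
  cases nonempty_fintype X
  have hd0 : d ≠ 0 := by lia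
  have hPmem (x : X) : P x ∈ d.divisors := Nat.mem_divisors.2 ⟨hPdvd x, hd0⟩
  have hPpos (x : X) : 0 < P x := Nat.pos_of_mem_divisors (hPmem x)
  have hφψ (e : ℕ) (he : 0 < e) : φ e ≤ ψ e :=
    hψ e ▸ Finset.single_le_sum (fun _ _ => Nat.zero_le _) (Nat.mem_divisors_self e he.ne')
  have hfiber (x : X) : #{y | P y = P x} ≤ ψ (P x) := by
    rw [← Fintype.card_subtype, ← Nat.card_eq_fintype_card, hPcard _ (hPdvd x)]
    exact hφψ _ (hPpos x)
  have hsublevel (r : ℝ) (hr : 0 < r) : (#{x | (ψ (P x) : ℝ) ≤ r} : ℝ) ≤ r ^ 2 :=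
    card_sublevel_le_sq P (fun e => ψ e) hPpos (fun x => Nat.cast_le.2 (hψge _ (hPmem x)))
      (fun x => Nat.cast_le.2 (hfiber x)) hr.le
  have hXlt : 1 < Nat.card X := hX ▸ hd.trans_le (hψge d (Nat.mem_divisors_self d hd0))
  calc (Nat.card (MulAction.orbitRel.Quotient Γ X) : ℝ)
      ≤ ((2 : ℕ) + 1) * (1 + 1 / C) * Nat.card X / Real.log (Nat.card X) :=
        card_orbits_le_of_card_sublevel_le_pow hC 2 _ hsublevel horbit hXlt
    _ = 3 * (1 + 1 / C) * ψ d / Real.log (ψ d) := by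
        rw [hX, Nat.cast_ofNat, two_add_one_eq_three]

/-- Orbit-counting bound: let `C > 0`, `φ : ℕ → ℕ`, and `ψ d = ∑_{e ∣ d} φ e`.
Suppose `ψ d ≥ d` for all `d ≥ 1` and `ψ` is nondecreasing on positive
integers.  Suppose for each `d ≥ 1` a finite set `G d` of cardinality `ψ d`
carries an action of a group `Γ d` together with a `Γ d`-stable partition into
parts indexed by the divisors `e` of `d` (encoded by `P d : G d → ℕ`), the
part indexed by `e` having cardinality `φ e`, such that every orbit contained
in the part indexed by `e` has cardinality at least `C * log (ψ e)`.  Then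
there is `C₁ > 0` such that for all `d > 1` the number of `Γ d`-orbits on
`G d` is at most `C₁ * ψ d / log (ψ d)`. -/
theorem orbit_bound
    (C : ℝ) (hC : 0 < C) (φ ψ : ℕ → ℕ)
    (hψ : ∀ d : ℕ, ψ d = ∑ e ∈ d.divisors, φ e)
    (hψge : ∀ d : ℕ, 1 ≤ d → d ≤ ψ d)
    (hψmono : ∀ d d' : ℕ, 1 ≤ d → d ≤ d' → ψ d ≤ ψ d')
    (G : ℕ → Type*) [∀ d, Fintype (G d)]
    (Γ : ℕ → Type*) [∀ d, Group (Γ d)] [∀ d, MulAction (Γ d) (G d)]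
    (hGcard : ∀ d : ℕ, 1 ≤ d → Nat.card (G d) = ψ d)
    (P : ∀ d : ℕ, G d → ℕ)
    (hPdvd : ∀ d : ℕ, 1 ≤ d → ∀ x : G d, P d x ∣ d)
    (hPstable : ∀ (d : ℕ) (γ : Γ d) (x : G d), P d (γ • x) = P d x)
    (hPcard : ∀ d e : ℕ, 1 ≤ d → e ∣ d →
      Nat.card {x : G d // P d x = e} = φ e)
    (horbit : ∀ d : ℕ, 1 ≤ d → ∀ x : G d,
      C * Real.log (ψ (P d x)) ≤ (Nat.card (MulAction.orbit (Γ d) x) : ℝ)) :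
    ∃ C₁ : ℝ, 0 < C₁ ∧ ∀ d : ℕ, 1 < d →
      (Nat.card (MulAction.orbitRel.Quotient (Γ d) (G d)) : ℝ)
        ≤ C₁ * (ψ d) / Real.log (ψ d) := by
  refine ⟨3 * (1 + 1 / C), by positivity, fun d hd => ?_⟩
  exact orbit_bound_general hC hψ hd (fun e he => hψge e (Nat.pos_of_mem_divisors he))
    (hGcard d hd.le) (P d) (hPdvd d hd.le) (fun e => hPcard d e hd.le) (horbit d hd.le)
end

section
/- Fix an integer q ≥ 2. There is a constant C > 0 such that for every integer d > 1 coprime to q, the number of orbits of the permutation x ↦ q·x of ℤ/dℤ (equivalently, of the action on ℤ/dℤ of the cyclic group generated by multiplication by q) is at most C · d / log d. -/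
/-!
The number of orbits is the sum over all points of the inverse size of their orbit. For a threshold
`m`, a point whose orbit has at least `m` elements contributes at most `1 / m`, any other point at
most `1`. A point with `q ^ j • x = x` is killed by `q ^ j - 1`, and a cyclic group of order `d` has
at most `q ^ j - 1` such points; summing over `0 < j < m`, fewer than `q ^ m` points have an orbit
of size less than `m`. Thus there are at most `q ^ m + d / m` orbits, and taking `m` just above
`log √d / log q` makes the first term `O(√d)` and the second `O(d / log d)`.
-/

open Finset Function MulAction

section OrbitCount

variable (G : Type*) {α : Type*} [Group G] [MulAction G α] [Fintype α]

theorem card_orbits_eq_sum_inv_card_orbit (K : Type*) [DivisionRing K] [CharZero K] :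
    (Nat.card (orbitRel.Quotient G α) : K) = ∑ x : α, (Nat.card (orbit G x) : K)⁻¹ := by
  classical
  have := Fintype.ofFinite (orbitRel.Quotient G α)
  have sum_orbit (ω : orbitRel.Quotient G α) :
      ∑ x : orbit G ω.out, (Nat.card (orbit G (x : α)) : K)⁻¹ = 1 := by
    have orbit_eq (x : orbit G ω.out) : orbit G (x : α) = orbit G ω.out := orbit_eq_iff.2 x.2
    have := (nonempty_orbit (M := G) ω.out).to_subtype
    have card_ne_zero : (Nat.card (orbit G ω.out) : K) ≠ 0 := Nat.cast_ne_zero.2 Nat.card_pos.ne'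
    simp only [orbit_eq, sum_const, card_univ, ← Nat.card_eq_fintype_card, nsmul_eq_mul,
      mul_inv_cancel₀ card_ne_zero]
  calc (Nat.card (orbitRel.Quotient G α) : K)
      = ∑ ω : orbitRel.Quotient G α, ∑ x : orbit G ω.out, (Nat.card (orbit G (x : α)) : K)⁻¹ := by
        simp only [sum_orbit, sum_const, card_univ, ← Nat.card_eq_fintype_card, nsmul_one]
    _ = ∑ x : α, (Nat.card (orbit G x) : K)⁻¹ := by
        rw [← Fintype.sum_sigma', ← (selfEquivSigmaOrbits G α).symm.sum_comp]
        rfl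

theorem card_orbits_le_card_small_orbit_add {m : ℕ} (hm : 0 < m) :
    (Nat.card (orbitRel.Quotient G α) : ℝ) ≤
      #{x : α | Nat.card (orbit G x) < m} + (Nat.card α : ℝ) / m := by
  have inv_card_le (x : α) :
      (Nat.card (orbit G x) : ℝ)⁻¹ ≤ (if Nat.card (orbit G x) < m then 1 else 0) + (m : ℝ)⁻¹ := by
    split_ifs with h
    · exact (Nat.cast_inv_le_one _).trans (le_add_of_nonneg_right (by positivity))
    · rw [zero_add]
      gcongr
      exact not_lt.1 h
  calc (Nat.card (orbitRel.Quotient G α) : ℝ) = ∑ x : α, (Nat.card (orbit G x) : ℝ)⁻¹ :=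
        card_orbits_eq_sum_inv_card_orbit G ℝ
    _ ≤ ∑ x : α, ((if Nat.card (orbit G x) < m then 1 else 0) + (m : ℝ)⁻¹) :=
        sum_le_sum fun x _ => inv_card_le x
    _ = #{x : α | Nat.card (orbit G x) < m} + (Nat.card α : ℝ) / m := by
        rw [sum_add_distrib, sum_boole, sum_const, card_univ, nsmul_eq_mul, div_eq_mul_inv,
          Nat.card_eq_fintype_card]

end OrbitCount

section CyclicGroup

variable {A : Type*} [AddGroup A] [IsAddCyclic A]

theorem card_isPeriodicPt_nsmul_le [Fintype A] [DecidableEq A] {q j : ℕ} (hq : 1 < q)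
    (hj : j ≠ 0) : #{x : A | IsPeriodicPt (q • ·) j x} ≤ q ^ j - 1 := by
  have one_lt_q_pow : 1 < q ^ j := Nat.one_lt_pow hj hq
  have isPeriodicPt_iff (x : A) : IsPeriodicPt (q • ·) j x ↔ (q ^ j - 1) • x = 0 := by
    rw [IsPeriodicPt, IsFixedPt, smul_iterate_apply, sub_nsmul x one_lt_q_pow.le, one_nsmul,
      ← sub_eq_add_neg, sub_eq_zero]
  simp only [isPeriodicPt_iff]
  exact IsAddCyclic.card_nsmul_eq_zero_le (Nat.sub_pos_of_lt one_lt_q_pow)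

theorem card_minimalPeriod_nsmul_lt_le [Fintype A] {q : ℕ} (hq : 1 < q)
    (hinj : Injective (q • · : A → A)) (m : ℕ) :
    #{x : A | minimalPeriod (q • ·) x < m} ≤ q ^ m := by
  classical
  have subset_biUnion : ({x : A | minimalPeriod (q • ·) x < m} : Finset A) ⊆
      (Ico 1 m).biUnion fun j => {x : A | IsPeriodicPt (q • ·) j x} := fun x hx => by
    have period_pos := minimalPeriod_pos_of_mem_periodicPts (hinj.mem_periodicPts x)
    exact mem_biUnion.2 ⟨minimalPeriod (q • ·) x, mem_Ico.2 ⟨period_pos, (mem_filter.1 hx).2⟩,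
      mem_filter.2 ⟨mem_univ x, isPeriodicPt_minimalPeriod _ x⟩⟩
  calc #{x : A | minimalPeriod (q • ·) x < m}
      ≤ ∑ j ∈ Ico 1 m, #{x : A | IsPeriodicPt (q • ·) j x} :=
        (card_le_card subset_biUnion).trans card_biUnion_le
    _ ≤ ∑ j ∈ Ico 1 m, q ^ j := sum_le_sum fun j hj =>
        (card_isPeriodicPt_nsmul_le hq (Nat.one_le_iff_ne_zero.1 (mem_Ico.1 hj).1)).trans
          (Nat.sub_le _ _)
    _ ≤ q ^ m := (Nat.geomSum_lt hq fun j hj => (mem_Ico.1 hj).2).le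

theorem card_orbits_zpowers_nsmul_le [Finite A] {q : ℕ} (hq : 1 < q) (π : Equiv.Perm A)
    (hπ : ∀ x, π x = q • x) {m : ℕ} (hm : 0 < m) :
    (Nat.card (orbitRel.Quotient (Subgroup.zpowers π) A) : ℝ) ≤
      (q : ℝ) ^ m + (Nat.card A : ℝ) / m := by
  have := Fintype.ofFinite A
  have coe_eq : ⇑π = (q • ·) := funext hπ
  have card_orbit (x : A) :
      Nat.card (orbit (Subgroup.zpowers π) x) = minimalPeriod (q • ·) x := by
    rw [Nat.card_congr (orbitZPowersEquiv π x), Nat.card_zmod, ← coe_eq]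
    rfl
  have card_small_orbit :
      #{x : A | Nat.card (orbit (Subgroup.zpowers π) x) < m} ≤ q ^ m := by
    simp only [card_orbit]
    exact card_minimalPeriod_nsmul_lt_le hq (coe_eq ▸ π.injective) m
  refine (card_orbits_le_card_small_orbit_add (Subgroup.zpowers π) hm).trans ?_
  gcongr
  exact_mod_cast card_small_orbit

end CyclicGroup

theorem pow_floor_logb_le {b x : ℝ} (hb : 1 < b) (hx : 1 ≤ x) : b ^ ⌊Real.logb b x⌋₊ ≤ x :=
  calc b ^ ⌊Real.logb b x⌋₊ = b ^ (⌊Real.logb b x⌋₊ : ℝ) := (Real.rpow_natCast _ _).symm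
    _ ≤ b ^ Real.logb b x :=
        Real.rpow_le_rpow_of_exponent_le hb.le (Nat.floor_le (Real.logb_nonneg hb hx))
    _ = x := Real.rpow_logb (by positivity) hb.ne' (by positivity)

theorem sqrt_le_two_mul_div_log {x : ℝ} (hx : 1 < x) : √x ≤ 2 * x / Real.log x := by
  have log_le : Real.log x ≤ 2 * √x := by
    have := Real.log_le_self (Real.sqrt_nonneg x)
    rw [Real.log_sqrt (by positivity)] at this
    linarith
  rw [le_div_iff₀ (Real.log_pos hx)]
  calc √x * Real.log x ≤ √x * (2 * √x) := by gcongr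
    _ = 2 * (√x * √x) := by ring
    _ = 2 * x := by rw [Real.mul_self_sqrt (by positivity)]

theorem exists_pow_add_div_le_mul_div_log {b x : ℝ} (hb : 1 < b) (hx : 1 < x) :
    ∃ m : ℕ, 0 < m ∧ b ^ m + x / m ≤ (2 * b + 2 * Real.log b) * x / Real.log x := by
  set t : ℝ := Real.logb b √x with ht
  have one_lt_sqrt : 1 < √x := Real.lt_sqrt_of_sq_lt (by simpa using hx)
  have t_pos : 0 < t := Real.logb_pos hb one_lt_sqrt
  have pow_le : b ^ (⌊t⌋₊ + 1) ≤ 2 * x / Real.log x * b := by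
    rw [pow_succ]
    gcongr
    exact (pow_floor_logb_le hb one_lt_sqrt.le).trans (sqrt_le_two_mul_div_log hx)
  have div_le : x / (⌊t⌋₊ + 1 : ℕ) ≤ x / t := by
    gcongr
    exact_mod_cast (Nat.lt_floor_add_one t).le
  refine ⟨⌊t⌋₊ + 1, Nat.succ_pos _, ?_⟩
  calc b ^ (⌊t⌋₊ + 1) + x / (⌊t⌋₊ + 1 : ℕ) ≤ 2 * x / Real.log x * b + x / t :=
        add_le_add pow_le div_le
    _ = (2 * b + 2 * Real.log b) * x / Real.log x := by
        rw [ht, Real.logb, Real.log_sqrt (by positivity), div_div, div_div_eq_mul_div]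
        ring

theorem mul_q_orbit_count_le_general {A : Type*} [AddGroup A] [IsAddCyclic A] [Finite A]
    [Nontrivial A] {q : ℕ} (hq : 2 ≤ q) (π : Equiv.Perm A) (hπ : ∀ x, π x = q • x) :
    (Nat.card (orbitRel.Quotient (Subgroup.zpowers π) A) : ℝ) ≤
      (2 * q + 2 * Real.log q) * Nat.card A / Real.log (Nat.card A) := by
  obtain ⟨m, hm, hle⟩ := exists_pow_add_div_le_mul_div_log (b := q) (x := Nat.card A)
    (by exact_mod_cast hq) (by exact_mod_cast Finite.one_lt_card)
  exact (card_orbits_zpowers_nsmul_le hq π hπ hm).trans hle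

/-- Fix `q ≥ 2`.  There is a constant `C > 0` such that for all `d > 1`
coprime to `q`, the number of orbits of the permutation `x ↦ q • x` of
`ℤ/dℤ` (i.e. of the cyclic group it generates acting on `ℤ/dℤ`) is at most
`C * d / log d`. -/
theorem mul_q_orbit_count_le
    (q : ℕ) (hq : 2 ≤ q) :
    ∃ C : ℝ, 0 < C ∧ ∀ d : ℕ, 1 < d → Nat.Coprime q d →
      ∀ π : Equiv.Perm (ZMod d), (∀ x : ZMod d, π x = (q : ZMod d) * x) →
        (Nat.card (MulAction.orbitRel.Quotient (Subgroup.zpowers π) (ZMod d)) : ℝ)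
          ≤ C * d / Real.log d := by
  refine ⟨2 * q + 2 * Real.log q, by positivity, fun d hd _ π hπ => ?_⟩
  have : Fact (1 < d) := ⟨hd⟩
  have : NeZero d := ⟨by omega⟩
  simpa only [Nat.card_zmod] using
    mul_q_orbit_count_le_general hq π fun x => (hπ x).trans (nsmul_eq_mul q x).symm
end

section
/- Let p be a prime, let k be a finite field of characteristic p, let m and n be positive integers, let W(k) be the ring of p-typical Witt vectors of k with Frobenius endomorphism σ, and let γ be a unit of W(k). Then any set S of solutions α ∈ W(k) of the equation σ^m(α) = γ·α whose elements are pairwise incongruent modulo p^n (i.e., α − α' ∉ p^n·W(k) for distinct α, α' ∈ S) has cardinality at most p^{n·m}. In particular this bound is independent of the cardinality of k. -/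
/-!
Let `E(γ)` be the additive group of solutions of `σ^m α = γ α`, and `V` the Verschiebung. If `V^n y`
lies in `E(γ)`, then `y` lies in `E(σ^n γ)`, since `V` commutes with `σ` and
`V^n y * γ = V^n (y * σ^n γ)`. Reading off the zeroth coefficient, `y₀` is a root of
`X^(p^m) - γ₀^(p^n) X`. So a class of solutions modulo `V^n` splits into at most `p^m` classes
modulo `V^(n+1)`, and there are at most `p^(n m)` solutions modulo `V^n`.

It remains to see that a solution `V^n y` is divisible by `p^n = V^n σ^n`, even when `σ` is not
surjective. If `γ` is a unit, then `y = σ^m y * σ^n γ⁻¹`, so if `y` is in the image of `σ^j` with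
`j < n`, it is in that of `σ^(j+1)`; hence it is in the image of `σ^n`. If `γ₀ = 0`, the
coefficients of a solution vanish one after another, so `E(γ) = 0`.
-/

open Polynomial in
theorem card_le_of_forall_pow_eq_mul {R : Type*} [CommRing R] [IsDomain R] {q : ℕ} (hq : 1 < q)
    (c : R) (T : Finset R) (hT : ∀ x ∈ T, x ^ q = c * x) : T.card ≤ q := by
  have hdeg : (C c * X : R[X]).degree < q :=
    (degree_C_mul_X_le c).trans_lt (by exact_mod_cast hq)
  have hmonic : (X ^ q - C c * X : R[X]).Monic := monic_X_pow_sub hdeg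
  have hroots : T.val ⊆ (X ^ q - C c * X : R[X]).roots := fun x hx => by
    simp [mem_roots hmonic.ne_zero, hT x hx]
  have hnat : (X ^ q - C c * X : R[X]).natDegree = q :=
    natDegree_eq_of_degree_eq_some <| by
      rw [degree_sub_eq_left_of_degree_lt (by rwa [degree_X_pow]), degree_X_pow]
  exact hnat ▸ card_le_degree_of_subset_roots hroots

/-- The additive group of Witt vectors `α` with `σ^m α = γ α`, the solutions to be counted. -/
noncomputable def frobeniusEigengroup {p : ℕ} [Fact p.Prime] {R : Type*} [CommRing R] (m : ℕ)
    (γ : WittVector p R) : AddSubgroup (WittVector p R) :=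
  ((WittVector.frobenius ^ m : WittVector p R →+* WittVector p R) :
    WittVector p R →+ WittVector p R).eqLocus (AddMonoidHom.mulLeft γ)

section Truncation

open WittVector

variable {p : ℕ} [Fact p.Prime] {R : Type*} [CommRing R] {n : ℕ} {x y : WittVector p R}

theorem eq_iterate_verschiebung_shift_of_mem_ker_truncate
    (hx : x ∈ RingHom.ker (truncate n)) : x = verschiebung^[n] (x.shift n) :=
  eq_iterate_verschiebung ((mem_ker_truncate n x).1 hx)

theorem coeff_sub_of_mem_ker_truncate (hx : x ∈ RingHom.ker (truncate n))
    (hy : y ∈ RingHom.ker (truncate n)) :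
    (x - y).coeff n = x.coeff n - y.coeff n := by
  have hcoeff : ∀ z : WittVector p R, (verschiebung^[n] z).coeff n = constantCoeff z := fun z => by
    simpa using iterate_verschiebung_coeff z n 0
  rw [eq_iterate_verschiebung_shift_of_mem_ker_truncate hx,
    eq_iterate_verschiebung_shift_of_mem_ker_truncate hy, ← iterate_map_sub]
  simp only [hcoeff, map_sub]

theorem mem_ker_truncate_succ (hx : x ∈ RingHom.ker (truncate n))
    (hn : x.coeff n = 0) : x ∈ RingHom.ker (truncate (n + 1)) := by
  rw [mem_ker_truncate, Nat.forall_lt_succ_right]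
  exact ⟨(mem_ker_truncate n x).1 hx, hn⟩

end Truncation

namespace frobeniusEigengroup

open WittVector

variable {p : ℕ} [Fact p.Prime] {R : Type*} [CommRing R] {m n : ℕ} {γ α : WittVector p R}

theorem mem_iff : α ∈ frobeniusEigengroup m γ ↔ WittVector.frobenius^[m] α = γ * α := by
  rw [← RingHom.coe_pow]
  rfl

theorem exists_iterate_frobenius_eq (hm : 0 < m) (hγ : IsUnit γ)
    (hα : α ∈ frobeniusEigengroup m (WittVector.frobenius^[n] γ)) :
    ∃ β, WittVector.frobenius^[n] β = α := by
  obtain ⟨δ, hδ⟩ := hγ.exists_left_inv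
  have hrec : WittVector.frobenius^[n] δ * WittVector.frobenius^[m] α = α := by
    rw [mem_iff.1 hα, ← mul_assoc, ← iterate_map_mul, hδ, iterate_map_one, one_mul]
  suffices ∀ j ≤ n, ∃ β, WittVector.frobenius^[j] β = α from this n le_rfl
  intro j hj
  induction j with
  | zero => exact ⟨α, rfl⟩
  | succ j ih =>
    obtain ⟨β, hβ⟩ := ih (Nat.le_of_succ_le hj)
    refine ⟨WittVector.frobenius^[n - (j + 1)] δ * WittVector.frobenius^[m - 1] β, ?_⟩
    rw [iterate_map_mul, ← Function.iterate_add_apply, ← Function.iterate_add_apply,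
      Nat.add_sub_cancel' hj, show j + 1 + (m - 1) = m + j by omega, Function.iterate_add_apply,
      hβ, hrec]

variable [CharP R p]

theorem iterate_verschiebung_mem_iff :
    verschiebung^[n] α ∈ frobeniusEigengroup m γ ↔
      α ∈ frobeniusEigengroup m (WittVector.frobenius^[n] γ) := by
  have hmul : γ * verschiebung^[n] α = verschiebung^[n] (WittVector.frobenius^[n] γ * α) := by
    rw [mul_comm, iterate_verschiebung_mul_left, mul_comm]
  rw [mem_iff, mem_iff, hmul, ← verschiebung_frobenius_comm.iterate_iterate n m α,
    ((verschiebung_injective p R).iterate n).eq_iff]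

theorem coeff_zero_pow (hα : α ∈ frobeniusEigengroup m γ) :
    α.coeff 0 ^ p ^ m = γ.coeff 0 * α.coeff 0 := by
  rw [← iterate_frobenius_coeff, mem_iff.1 hα, mul_coeff_zero]

theorem shift_mem (hα : α ∈ frobeniusEigengroup m γ)
    (htrunc : α ∈ RingHom.ker (truncate n)) :
    α.shift n ∈ frobeniusEigengroup m (WittVector.frobenius^[n] γ) := by
  rwa [← iterate_verschiebung_mem_iff, ← eq_iterate_verschiebung_shift_of_mem_ker_truncate htrunc]

theorem coeff_pow_of_mem_ker_truncate (hα : α ∈ frobeniusEigengroup m γ)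
    (htrunc : α ∈ RingHom.ker (truncate n)) :
    α.coeff n ^ p ^ m = γ.coeff 0 ^ p ^ n * α.coeff n := by
  simpa [iterate_frobenius_coeff, shift_coeff] using coeff_zero_pow (shift_mem hα htrunc)

section Counting

variable [IsDomain R]

theorem card_le_of_truncate_eq_of_injOn_truncate_succ (hm : 0 < m)
    {S : Finset (WittVector p R)} (hS : ∀ α ∈ S, α ∈ frobeniusEigengroup m γ)
    (hconst : ∀ α ∈ S, ∀ β ∈ S, truncate n α = truncate n β)
    (hinj : Set.InjOn (truncate (n + 1)) (S : Set (WittVector p R))) : S.card ≤ p ^ m := by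
  classical
  obtain rfl | ⟨α₀, hα₀⟩ := S.eq_empty_or_nonempty
  · simp
  have hker : ∀ α ∈ S, ∀ β ∈ S, α - β ∈ RingHom.ker (truncate n) :=
    fun α hα β hβ => (RingHom.sub_mem_ker_iff _).2 (hconst α hα β hβ)
  have hcoeff_inj : Set.InjOn (fun α => (α - α₀).coeff n) (S : Set (WittVector p R)) := by
    intro α hα β hβ heq
    refine hinj hα hβ ((RingHom.sub_mem_ker_iff _).1 (mem_ker_truncate_succ (hker α hα β hβ) ?_))
    rw [← sub_sub_sub_cancel_right α β α₀,
      coeff_sub_of_mem_ker_truncate (hker α hα α₀ hα₀) (hker β hβ α₀ hα₀)]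
    exact sub_eq_zero.2 heq
  rw [← Finset.card_image_of_injOn hcoeff_inj]
  refine card_le_of_forall_pow_eq_mul (Nat.one_lt_pow hm.ne' (Fact.out : p.Prime).one_lt)
    (γ.coeff 0 ^ p ^ n) _ (Finset.forall_mem_image.2 fun α hα => ?_)
  exact coeff_pow_of_mem_ker_truncate (sub_mem (hS α hα) (hS α₀ hα₀)) (hker α hα α₀ hα₀)

theorem card_le_of_injOn_truncate (hm : 0 < m) {S : Finset (WittVector p R)}
    (hS : ∀ α ∈ S, α ∈ frobeniusEigengroup m γ)
    (hinj : Set.InjOn (truncate n) (S : Set (WittVector p R))) : S.card ≤ p ^ (n * m) := by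
  classical
  induction n generalizing S with
  | zero =>
    rw [zero_mul, pow_zero, Finset.card_le_one]
    exact fun α hα β hβ => hinj hα hβ (TruncatedWittVector.ext (Fin.elim0 ·))
  | succ n ih =>
    obtain ⟨S', hS', hinj', himage⟩ := Finset.exists_subset_injOn_image_eq_of_surjOn
      (S : Set (WittVector p R)) (S.image (truncate n)) (fun _ => Finset.mem_image.1)
    have hclasses : (S.image (truncate n)).card ≤ p ^ (n * m) := by
      rw [← himage, Finset.card_image_of_injOn hinj']
      exact ih (fun α hα => hS α (hS' hα)) hinj'
    have hfiber : ∀ t ∈ S.image (truncate n),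
        (S.filter fun α => truncate n α = t).card ≤ p ^ m := fun t _ =>
      card_le_of_truncate_eq_of_injOn_truncate_succ hm
        (fun α hα => hS α (Finset.mem_filter.1 hα).1)
        (fun α hα β hβ => (Finset.mem_filter.1 hα).2.trans (Finset.mem_filter.1 hβ).2.symm)
        (hinj.mono (Finset.filter_subset _ S))
    calc S.card ≤ p ^ m * (S.image (truncate n)).card := Finset.card_le_mul_card_image _ _ hfiber
      _ ≤ p ^ m * p ^ (n * m) := Nat.mul_le_mul_left _ hclasses
      _ = p ^ ((n + 1) * m) := by ring

end Counting

theorem pow_dvd_of_isUnit (hm : 0 < m) (hγ : IsUnit γ) (hα : α ∈ frobeniusEigengroup m γ)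
    (htrunc : α ∈ RingHom.ker (truncate n)) : (p : WittVector p R) ^ n ∣ α := by
  obtain ⟨β, hβ⟩ := exists_iterate_frobenius_eq hm hγ (shift_mem hα htrunc)
  rw [eq_iterate_verschiebung_shift_of_mem_ker_truncate htrunc, ← hβ,
    iterate_verschiebung_iterate_frobenius]
  exact dvd_mul_left _ _

theorem eq_zero_of_coeff_zero_eq_zero [IsReduced R] (hγ : γ.coeff 0 = 0)
    (hα : α ∈ frobeniusEigengroup m γ) : α = 0 := by
  have htrunc : ∀ n, α ∈ RingHom.ker (truncate n) := fun n => by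
    induction n with
    | zero => exact (mem_ker_truncate 0 α).2 fun i hi => absurd hi i.not_lt_zero
    | succ n ih =>
      have hpow : α.coeff n ^ p ^ m = 0 := by
        rw [coeff_pow_of_mem_ker_truncate hα ih, hγ,
          zero_pow (pow_ne_zero n (Fact.out : p.Prime).ne_zero), zero_mul]
      exact mem_ker_truncate_succ ih (eq_zero_of_pow_eq_zero hpow)
  refine WittVector.ext fun n => ?_
  rw [zero_coeff]
  exact (mem_ker_truncate (n + 1) α).1 (htrunc (n + 1)) n n.lt_succ_self

theorem pow_dvd_of_mem_ker_truncate {k : Type*} [Field k] [CharP k p] {γ α : WittVector p k}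
    (hm : 0 < m) (hα : α ∈ frobeniusEigengroup m γ)
    (htrunc : α ∈ RingHom.ker (truncate n)) : (p : WittVector p k) ^ n ∣ α := by
  by_cases hγ : γ.coeff 0 = 0
  · exact eq_zero_of_coeff_zero_eq_zero hγ hα ▸ dvd_zero _
  · exact pow_dvd_of_isUnit hm (isUnit_of_coeff_zero_ne_zero γ hγ) hα htrunc

end frobeniusEigengroup

theorem witt_frobenius_eqn_solutions_card_le_general
    (p : ℕ) [Fact p.Prime] (k : Type*) [Field k] [CharP k p] (m n : ℕ) (hm : 0 < m)
    (γ : WittVector p k) (S : Finset (WittVector p k))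
    (hsol : ∀ α ∈ S,
      (⇑(WittVector.frobenius : WittVector p k →+* WittVector p k))^[m] α = γ * α)
    (hincong : ∀ α ∈ S, ∀ α' ∈ S, α ≠ α' → ¬ ((p : WittVector p k) ^ n ∣ α - α')) :
    S.card ≤ p ^ (n * m) := by
  have hS : ∀ α ∈ S, α ∈ frobeniusEigengroup m γ :=
    fun α hα => frobeniusEigengroup.mem_iff.2 (hsol α hα)
  refine frobeniusEigengroup.card_le_of_injOn_truncate hm hS fun α hα α' hα' htrunc => ?_
  by_contra hne
  exact hincong α hα α' hα' hne <| frobeniusEigengroup.pow_dvd_of_mem_ker_truncate hm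
    (sub_mem (hS α hα) (hS α' hα')) ((RingHom.sub_mem_ker_iff _).2 htrunc)

/-- Let `k` be a finite field of characteristic `p`, `W(k)` its ring of
`p`-typical Witt vectors with Frobenius `σ`, and `γ` a unit of `W(k)`.  Then
any set of solutions `α ∈ W(k)` of `σ^m(α) = γ * α` which are pairwise
incongruent modulo `p^n` has cardinality at most `p^(n*m)` (in particular the
bound is independent of the cardinality of `k`). -/
theorem witt_frobenius_eqn_solutions_card_le
    (p : ℕ) [Fact p.Prime] (k : Type*) [Field k] [Fintype k] [CharP k p]
    (m n : ℕ) (hm : 0 < m) (hn : 0 < n)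
    (γ : (WittVector p k)ˣ)
    (S : Finset (WittVector p k))
    (hsol : ∀ α ∈ S,
      (⇑(WittVector.frobenius : WittVector p k →+* WittVector p k))^[m] α
        = (γ : WittVector p k) * α)
    (hincong : ∀ α ∈ S, ∀ α' ∈ S, α ≠ α' →
      ¬ ((p : WittVector p k) ^ n ∣ α - α')) :
    S.card ≤ p ^ (n * m) :=
  witt_frobenius_eqn_solutions_card_le_general p k m n hm γ S hsol hincong
end
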